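/- A binary relation ≽ on A^N, where (A, ≥) is a meet-semilattice, is generalized threshold sufficientarian (sufficientarian with a sufficient set that is a ≥-filter) if and only if it satisfies weak order, symmetry, separability, sufficientarian judgment, monotonicity, and ≥-complements. -/

import Mathlib

open Function

section Defs

variable {N A : Type*}

/-- Weak order: complete and transitive. -/
def WeakOrderRel (R : (N → A) → (N → A) → Prop) : Prop :=
  (∀ x y, R x y ∨ R y x) ∧ ∀ x y z, R x y → R y z → R x z

/-- The strict part of a relation. -/
def StrictRel (R : (N → A) → (N → A) → Prop) (x y : N → A) : Prop :=
  R x y ∧ ¬ R y x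

/-- Symmetry: any allocation is socially indifferent to any permutation of it. -/
def SymmetryAx (R : (N → A) → (N → A) → Prop) : Prop :=
  ∀ (σ : Equiv.Perm N) (x : N → A), R x (x ∘ σ) ∧ R (x ∘ σ) x

open Classical in
/-- `splice M x y` agrees with `x` on `M` and with `y` off `M`. -/
noncomputable def splice (M : Set N) (x y : N → A) : N → A :=
  fun i => if i ∈ M then x i else y i

/-- Separability. -/
def SeparabilityAx (R : (N → A) → (N → A) → Prop) : Prop :=
  ∀ (M : Set N) (x y x' y' : N → A),
    (R (splice M x y) (splice M x' y) ↔ R (splice M x y') (splice M x' y'))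

open Classical in
/-- `alloc i a b` gives `a` to agent `i` and `b` to everyone else. -/
noncomputable def alloc (i : N) (a b : A) : N → A :=
  Function.update (fun _ => b) i a

open Classical in
/-- `alloc2 i j a c b` gives `a` to `i`, `c` to `j`, and `b` to the rest. -/
noncomputable def alloc2 (i j : N) (a c b : A) : N → A :=
  Function.update (alloc i a b) j c

/-- Sufficientarian judgment. -/
def SuffJudgment (R : (N → A) → (N → A) → Prop) : Prop :=
  ∀ (a b c : A) (i j : N), i ≠ j →
    StrictRel R (fun _ => b) (alloc i a b) →
    R (alloc i a b) (alloc2 i j a c b)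

/-- Weak sufficientarian judgment. -/
def WeakSuffJudgment (R : (N → A) → (N → A) → Prop) : Prop :=
  ∀ (a b c : A) (i j : N), i ≠ j →
    StrictRel R (fun _ => b) (alloc i a b) →
    StrictRel R (fun _ => b) (alloc2 i j a c b)

/-- Sufficientarianism: comparisons count agents whose consumption is in a sufficient set. -/
def IsSufficientarian [Fintype N] (R : (N → A) → (N → A) → Prop) : Prop :=
  ∃ S : Set A, ∀ x y : N → A,
    R x y ↔ Nat.card {i : N // x i ∈ S} ≥ Nat.card {i : N // y i ∈ S}

end Defs

/-- ≥-Complements. -/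
def ComplementsAx {N A : Type*} [SemilatticeInf A] (R : (N → A) → (N → A) → Prop) : Prop :=
  ∀ (i : N) (a b c : A),
    StrictRel R (alloc i a c) (alloc i (a ⊓ b) c) → StrictRel R (alloc i a c) (alloc i b c)

/-- Monotonicity. -/
def MonotonicityAx {N A : Type*} [Preorder A] (R : (N → A) → (N → A) → Prop) : Prop :=
  ∀ x y : N → A, (∀ i, y i ≤ x i) → R x y

/-- Generalized threshold sufficientarianism: sufficientarian with a sufficient set
that is a ≥-filter (upward closed and closed under binary meets). -/
def IsGenThresholdSuff {N A : Type*} [Fintype N] [SemilatticeInf A]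
    (R : (N → A) → (N → A) → Prop) : Prop :=
  ∃ S : Set A, (∀ x ∈ S, ∀ y : A, x ≤ y → y ∈ S) ∧ (∀ x ∈ S, ∀ y ∈ S, x ⊓ y ∈ S) ∧
    ∀ x y : N → A,
      R x y ↔ Nat.card {i : N // x i ∈ S} ≥ Nat.card {i : N // y i ∈ S}

/-!
Whether giving one agent the level `a` rather than `b` is an improvement depends neither on the
other agents, by separability, nor on who the agent is, by symmetry, so `R` induces a weak order on
levels. A level that is strictly better than some other level is, by sufficientarian judgment,
weakly better than every level. There are therefore at most two indifference classes of levels, and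
allocations are ranked by how many agents are in the upper one: permute one allocation so that its
agents in the upper class cover those of the other, then compare agent by agent. Given a sufficient
set, monotonicity says that it is an upper set, and complements say that it is closed under meets.
-/

namespace WeakOrderRel

variable {N A : Type*} {R : (N → A) → (N → A) → Prop}

lemma total (hW : WeakOrderRel R) (x y : N → A) : R x y ∨ R y x := hW.1 x y

lemma refl (hW : WeakOrderRel R) (x : N → A) : R x x := or_self_iff.1 (hW.total x x)

lemma trans (hW : WeakOrderRel R) {x y z : N → A} (hxy : R x y) (hyz : R y z) : R x z :=
  hW.2 x y z hxy hyz

lemma rel_of_forall_rel_update [Finite N] [DecidableEq N] (hW : WeakOrderRel R) {x y : N → A}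
    (h : ∀ i z, R (update z i (x i)) (update z i (y i))) : R x y := by
  have := Fintype.ofFinite N
  -- Move from `x` to `y` one agent at a time; `F` is the set of agents already moved.
  have hpiecewise (F : Finset N) : R x (F.piecewise y x) := by
    induction F using Finset.induction_on with
    | empty => simpa only [Finset.piecewise_empty] using hW.refl x
    | insert i F hi ih =>
      have hmove := h i (F.piecewise y x)
      rw [← Finset.piecewise_eq_of_notMem F y x hi, update_eq_self,
        ← Finset.piecewise_insert] at hmove
      exact hW.trans ih hmove
  simpa only [Finset.piecewise_univ] using hpiecewise Finset.univ

end WeakOrderRel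

section Allocations

variable {N A : Type*}

lemma preimage_splice (M : Set N) (x y : N → A) (S : Set A) :
    splice M x y ⁻¹' S = M ∩ x ⁻¹' S ∪ y ⁻¹' S \ M := by
  ext j
  by_cases hj : j ∈ M <;> simp [splice, hj]

variable [DecidableEq N]

lemma alloc_eq_update (i : N) (a b : A) : alloc i a b = update (fun _ => b) i a := by
  unfold alloc
  congr!

lemma alloc2_eq_update (i j : N) (a c b : A) : alloc2 i j a c b = update (alloc i a b) j c := by
  unfold alloc2
  congr!

lemma update_const_self (i : N) (b : A) : update (fun _ => b) i b = fun _ => b :=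
  update_eq_self i fun _ => b

lemma update_alloc_of_ne {i j : N} (hij : i ≠ j) (a b : A) :
    update (alloc i a b) j b = alloc i a b := by
  rw [alloc_eq_update, update_comm hij, update_const_self]

lemma splice_singleton (i : N) (x y : N → A) : splice {i} x y = update y i (x i) := by
  ext j
  rcases eq_or_ne j i with rfl | hji
  · simp [splice]
  · simp [splice, hji]

end Allocations

/-- `S` is a sufficient set for `R`: allocations are ranked by the number of agents whose level
lies in `S`. The number is the `Set.ncard` of a preimage, so that the API for cardinalities of
sets applies; an infinite set counts as `0`. -/
def IsSufficientSet {N A : Type*} (R : (N → A) → (N → A) → Prop) (S : Set A) : Prop :=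
  ∀ x y : N → A, R x y ↔ (y ⁻¹' S).ncard ≤ (x ⁻¹' S).ncard

lemma isSufficientarian_iff_exists_isSufficientSet {N A : Type*} [Fintype N]
    {R : (N → A) → (N → A) → Prop} : IsSufficientarian R ↔ ∃ S, IsSufficientSet R S :=
  Iff.rfl

lemma isGenThresholdSuff_iff_exists_isSufficientSet {N A : Type*} [Fintype N] [SemilatticeInf A]
    {R : (N → A) → (N → A) → Prop} :
    IsGenThresholdSuff R ↔ ∃ S, IsSufficientSet R S ∧ IsUpperSet S ∧ InfClosed S :=
  ⟨fun ⟨S, hup, hinf, hS⟩ =>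
    ⟨S, hS, fun _ _ hab ha => hup _ ha _ hab, fun _ ha _ hb => hinf _ ha _ hb⟩,
  fun ⟨S, hS, hup, hinf⟩ =>
    ⟨S, fun _ ha _ hab => hup hab ha, fun _ ha _ hb => hinf ha hb, hS⟩⟩

namespace IsSufficientSet

variable {N A : Type*} {R : (N → A) → (N → A) → Prop} {S : Set A}

lemma weakOrderRel (hS : IsSufficientSet R S) : WeakOrderRel R := by
  refine ⟨fun x y => ?_, fun x y z hxy hyz => ?_⟩
  · rw [hS, hS]
    exact le_total _ _
  · rw [hS] at *
    exact hyz.trans hxy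

lemma symmetryAx (hS : IsSufficientSet R S) : SymmetryAx R := by
  intro σ x
  have hcard : (x ∘ σ ⁻¹' S).ncard = (x ⁻¹' S).ncard := by
    rw [Set.preimage_comp, ← Equiv.image_symm_eq_preimage,
      Set.ncard_image_of_injective _ σ.symm.injective]
  exact ⟨(hS _ _).2 hcard.le, (hS _ _).2 hcard.ge⟩

section Finite

variable [Finite N]

lemma separabilityAx (hS : IsSufficientSet R S) : SeparabilityAx R := by
  have hcard (M : Set N) (x y : N → A) :
      (splice M x y ⁻¹' S).ncard = (M ∩ x ⁻¹' S).ncard + (y ⁻¹' S \ M).ncard := by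
    rw [preimage_splice, Set.ncard_union_eq]
    exact Set.disjoint_sdiff_right.mono_left Set.inter_subset_left
  intro M x y x' y'
  rw [hS, hS, hcard, hcard, hcard, hcard, Nat.add_le_add_iff_right, Nat.add_le_add_iff_right]

lemma rel_of_forall_mem (hS : IsSufficientSet R S) {x y : N → A} (h : ∀ i, y i ∈ S → x i ∈ S) :
    R x y :=
  (hS x y).2 (Set.ncard_le_ncard h)

lemma rel_update_iff [DecidableEq N] (hS : IsSufficientSet R S) (x : N → A) (i : N) (a b : A) :
    R (update x i a) (update x i b) ↔ (b ∈ S → a ∈ S) := by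
  constructor
  · intro hR hb
    by_contra ha
    have hssub : update x i a ⁻¹' S ⊂ update x i b ⁻¹' S := by
      refine (Set.ssubset_iff_of_subset fun j hj => ?_).2 ⟨i, by simpa using hb, by simpa using ha⟩
      rcases eq_or_ne j i with rfl | hji
      · exact absurd (by simpa using hj) ha
      · simpa [hji] using hj
    exact ((hS _ _).1 hR).not_gt (Set.ncard_lt_ncard hssub)
  · intro h
    refine hS.rel_of_forall_mem fun j => ?_
    rcases eq_or_ne j i with rfl | hji
    · simpa using h
    · simp [hji]

lemma strictRel_update_iff [DecidableEq N] (hS : IsSufficientSet R S) (x : N → A) (i : N)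
    (a b : A) : StrictRel R (update x i a) (update x i b) ↔ a ∈ S ∧ b ∉ S := by
  rw [StrictRel, hS.rel_update_iff, hS.rel_update_iff]
  tauto

lemma suffJudgment (hS : IsSufficientSet R S) : SuffJudgment R := by
  classical
  intro a b c i j hij hba
  have hb : b ∈ S := by
    refine ((hS.strictRel_update_iff (fun _ => b) i b a).1 ?_).1
    rwa [update_const_self, ← alloc_eq_update]
  have hjudge := (hS.rel_update_iff (alloc i a b) j b c).2 fun _ => hb
  rwa [update_alloc_of_ne hij, ← alloc2_eq_update] at hjudge

lemma monotonicityAx_iff [Nonempty N] [Preorder A] (hS : IsSufficientSet R S) :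
    MonotonicityAx R ↔ IsUpperSet S := by
  classical
  refine ⟨fun hmon a b hab => ?_, fun hup x y hyx => hS.rel_of_forall_mem fun i => hup (hyx i)⟩
  exact (hS.rel_update_iff (fun _ => a) (Classical.arbitrary N) b a).1
    (hmon _ _ (update_le_update_iff.2 ⟨hab, fun _ _ => le_rfl⟩))

lemma complementsAx_iff [Nonempty N] [SemilatticeInf A] (hS : IsSufficientSet R S) :
    ComplementsAx R ↔ InfClosed S := by
  classical
  simp only [ComplementsAx, alloc_eq_update, hS.strictRel_update_iff]
  constructor
  · intro hcomp a ha b hb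
    by_contra hab
    exact (hcomp (Classical.arbitrary N) a b a ⟨ha, hab⟩).2 hb
  · exact fun hinf _ a b _ ⟨ha, hab⟩ => ⟨ha, fun hb => hab (hinf ha hb)⟩

end Finite

end IsSufficientSet

lemma exists_perm_mapsTo_of_ncard_le {N : Type*} [Finite N] {s t : Set N}
    (h : s.ncard ≤ t.ncard) : ∃ σ : Equiv.Perm N, Set.MapsTo σ s t := by
  classical
  have := Fintype.ofFinite N
  obtain ⟨e⟩ : Nonempty (s ↪ t) := Function.Embedding.nonempty_of_card_le <| by
    rwa [← Nat.card_eq_fintype_card, ← Nat.card_eq_fintype_card]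
  obtain ⟨σ, hσ⟩ := Equiv.Perm.exists_extending_pair (Subtype.val : s → N) (Subtype.val ∘ e)
    Subtype.val_injective (Subtype.val_injective.comp e.injective)
  exact ⟨σ, fun i hi => hσ ⟨i, hi⟩ ▸ (e ⟨i, hi⟩).2⟩

/-- The comparison of individual levels induced by `R`: giving an agent `a` rather than `b` is
weakly better, whoever the agent is and whatever the other agents get. -/
def LevelGE {N A : Type*} [DecidableEq N] (R : (N → A) → (N → A) → Prop) (a b : A) : Prop :=
  ∀ x i, R (update x i a) (update x i b)

/-- The levels that are strictly better than some other level, where strictness is encoded as the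
failure of the reverse comparison. When the levels form a single indifference class this is empty,
although the set of all levels would be sufficient as well. -/
def sufficientLevels {N A : Type*} [DecidableEq N] (R : (N → A) → (N → A) → Prop) : Set A :=
  {b | ∃ a, ¬ LevelGE R a b}

section Levels

variable {N A : Type*} {R : (N → A) → (N → A) → Prop} [DecidableEq N]

lemma LevelGE.trans (hW : WeakOrderRel R) {a b c : A} (hab : LevelGE R a b)
    (hbc : LevelGE R b c) : LevelGE R a c :=
  fun x i => hW.trans (hab x i) (hbc x i)

lemma SeparabilityAx.rel_update_congr (hsep : SeparabilityAx R) (x y : N → A) (i : N) (a b : A) :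
    R (update x i a) (update x i b) ↔ R (update y i a) (update y i b) := by
  simpa only [splice_singleton] using hsep {i} (fun _ => a) x (fun _ => b) y

lemma rel_update_iff_levelGE (hW : WeakOrderRel R) (hsym : SymmetryAx R)
    (hsep : SeparabilityAx R) (x : N → A) (i : N) (a b : A) :
    R (update x i a) (update x i b) ↔ LevelGE R a b := by
  refine ⟨fun h y j => ?_, fun h => h x i⟩
  have hswap (c : A) : update x i c ∘ Equiv.swap i j = update (x ∘ Equiv.swap i j) j c := by
    rw [update_comp_equiv, Equiv.symm_swap, Equiv.swap_apply_left]
  rw [hsep.rel_update_congr y (x ∘ Equiv.swap i j), ← hswap, ← hswap]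
  exact hW.trans (hsym _ _).2 (hW.trans h (hsym _ _).1)

lemma levelGE_of_mem_sufficientLevels [Nontrivial N] (hW : WeakOrderRel R)
    (hsym : SymmetryAx R) (hsep : SeparabilityAx R) (hsj : SuffJudgment R) {b : A}
    (hb : b ∈ sufficientLevels R) (c : A) : LevelGE R b c := by
  obtain ⟨a, hab⟩ := hb
  obtain ⟨i, j, hij⟩ := exists_pair_ne N
  have hstrict : StrictRel R (fun _ => b) (alloc i a b) := by
    have hnot : ¬ R (alloc i a b) (fun _ => b) := by
      rwa [← rel_update_iff_levelGE hW hsym hsep (fun _ => b) i, update_const_self,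
        ← alloc_eq_update] at hab
    exact ⟨(hW.total _ _).resolve_right hnot, hnot⟩
  rw [← rel_update_iff_levelGE hW hsym hsep (alloc i a b) j, update_alloc_of_ne hij,
    ← alloc2_eq_update]
  exact hsj a b c i j hij hstrict

lemma levelGE_iff_mem_sufficientLevels [Nontrivial N] (hW : WeakOrderRel R)
    (hsym : SymmetryAx R) (hsep : SeparabilityAx R) (hsj : SuffJudgment R) {a b : A} :
    LevelGE R a b ↔ (b ∈ sufficientLevels R → a ∈ sufficientLevels R) := by
  refine ⟨fun hab ⟨c, hcb⟩ => ⟨c, fun hca => hcb (hca.trans hW hab)⟩, fun h => ?_⟩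
  by_contra hab
  exact hab (levelGE_of_mem_sufficientLevels hW hsym hsep hsj (h ⟨a, hab⟩) b)

end Levels

lemma isSufficientSet_of_rel_update_iff {N A : Type*} [Finite N] [DecidableEq N]
    {R : (N → A) → (N → A) → Prop} {S : Set A} (hW : WeakOrderRel R) (hsym : SymmetryAx R)
    (hS : ∀ x i a b, R (update x i a) (update x i b) ↔ (b ∈ S → a ∈ S)) :
    IsSufficientSet R S := by
  have hle {x y : N → A} (h : (y ⁻¹' S).ncard ≤ (x ⁻¹' S).ncard) : R x y := by
    obtain ⟨σ, hσ⟩ := exists_perm_mapsTo_of_ncard_le h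
    exact hW.trans (hsym σ x).1
      (hW.rel_of_forall_rel_update fun i z => (hS z i _ _).2 (@hσ i))
  refine fun x y => ⟨fun hxy => ?_, hle⟩
  by_contra! hlt
  obtain ⟨i, hyi, hxi⟩ := Set.exists_mem_notMem_of_ncard_lt_ncard hlt
  -- Raising agent `i` from `x i` to `y i` keeps the count of `x` at most that of `y`, so `hle`
  -- makes the raised allocation at most as good as `y`, hence as `x`.
  have hcard : (update x i (y i) ⁻¹' S).ncard ≤ (y ⁻¹' S).ncard := by
    refine le_trans (Set.ncard_le_ncard (t := insert i (x ⁻¹' S)) fun j hj => ?_)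
      ((Set.ncard_insert_le i _).trans hlt)
    rcases eq_or_ne j i with hji | hji
    · exact Or.inl hji
    · exact Or.inr (by simpa [hji] using hj)
  have hraise : R (update x i (x i)) (update x i (y i)) := by
    rw [update_eq_self]
    exact hW.trans hxy (hle hcard)
  exact hxi ((hS x i _ _).1 hraise hyi)

theorem isSufficientarian_iff {N A : Type*} [Fintype N] [Nontrivial N]
    {R : (N → A) → (N → A) → Prop} :
    IsSufficientarian R ↔
      WeakOrderRel R ∧ SymmetryAx R ∧ SeparabilityAx R ∧ SuffJudgment R := by
  classical
  rw [isSufficientarian_iff_exists_isSufficientSet]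
  constructor
  · rintro ⟨S, hS⟩
    exact ⟨hS.weakOrderRel, hS.symmetryAx, hS.separabilityAx, hS.suffJudgment⟩
  · rintro ⟨hW, hsym, hsep, hsj⟩
    refine ⟨sufficientLevels R, isSufficientSet_of_rel_update_iff hW hsym fun x i a b => ?_⟩
    rw [rel_update_iff_levelGE hW hsym hsep, levelGE_iff_mem_sufficientLevels hW hsym hsep hsj]

theorem isGenThresholdSuff_iff {N A : Type*} [Fintype N] [Nonempty N] [SemilatticeInf A]
    {R : (N → A) → (N → A) → Prop} :
    IsGenThresholdSuff R ↔ IsSufficientarian R ∧ MonotonicityAx R ∧ ComplementsAx R := by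
  rw [isGenThresholdSuff_iff_exists_isSufficientSet, isSufficientarian_iff_exists_isSufficientSet,
    ← exists_and_right]
  refine exists_congr fun S => and_congr_right fun hS => ?_
  rw [hS.monotonicityAx_iff, hS.complementsAx_iff]

/-- generalized threshold sufficientarianism is characterized by weak order,
symmetry, separability, sufficientarian judgment, monotonicity and ≥-complements. -/
theorem stmt5 {N A : Type*} [Fintype N] (hN : 2 ≤ Fintype.card N) [SemilatticeInf A]
    (R : (N → A) → (N → A) → Prop) :
    IsGenThresholdSuff R ↔
      (WeakOrderRel R ∧ SymmetryAx R ∧ SeparabilityAx R ∧ SuffJudgment R ∧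
        MonotonicityAx R ∧ ComplementsAx R) := by
  have : Nontrivial N := Fintype.one_lt_card_iff_nontrivial.1 hN
  rw [isGenThresholdSuff_iff, isSufficientarian_iff]
  simp only [and_assoc]
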